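/- Let P_0, P_1, …, P_{n−1} be points of ℝ² (indices taken modulo n, n ≥ 3), and let O, O′ ∈ ℝ² be points such that for every i, the triples (O, P_i, P_{i+1}) and (O′, P_i, P_{i+1}) are each affinely independent. Then Σ_{i=0}^{n−1} Area(O, P_i, P_{i+1})·CC(O, P_i, P_{i+1}) = Σ_{i=0}^{n−1} Area(O′, P_i, P_{i+1})·CC(O′, P_i, P_{i+1}). In other words, the circumcenter of mass of the polygon P_0P_1⋯P_{n−1}, computed from a fan triangulation, does not depend on the choice of the apex of the fan. -/

import Mathlib

/-- The signed area of the ordered triple `(A, B, C)` of points of `ℝ²`: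
`(1/2) · det(B − A, C − A)`. -/
noncomputable def sarea (A B C : EuclideanSpace ℝ (Fin 2)) : ℝ :=
  ((B 0 - A 0) * (C 1 - A 1) - (B 1 - A 1) * (C 0 - A 0)) / 2

/-!
Four times `sarea A B C` times the circumcenter of `A B C` is, by Cramer's rule applied to the
equations of two perpendicular bisectors, a polynomial in the vertices. It is the sum over the three
oriented edges of an alternating function of the endpoints. Summed over a fan, the contributions of
the spokes from the apex to the vertices cancel and only the boundary of the polygon remains.
-/

open scoped RealInnerProductSpace

theorem two_mul_inner_sub_of_dist_eq {V : Type*} [NormedAddCommGroup V] [InnerProductSpace ℝ V]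
    {c A B : V} (h : dist c A = dist c B) : 2 * ⟪c, B - A⟫ = ‖B‖ ^ 2 - ‖A‖ ^ 2 := by
  have hsq : ‖c - A‖ ^ 2 = ‖c - B‖ ^ 2 := by rw [← dist_eq_norm, ← dist_eq_norm, h]
  rw [norm_sub_sq_real, norm_sub_sq_real] at hsq
  rw [inner_sub_right]
  linarith

/-- The clockwise rotation of `ℝ²` by a right angle, which turns the inner product into the
determinant: `⟪u, clockwiseTurn v⟫ = det (u, v)`. -/
noncomputable def clockwiseTurn : EuclideanSpace ℝ (Fin 2) →ₗ[ℝ] EuclideanSpace ℝ (Fin 2) :=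
  Matrix.toEuclideanLin !![0, 1; -1, 0]

theorem clockwiseTurn_apply_zero (v : EuclideanSpace ℝ (Fin 2)) : clockwiseTurn v 0 = v 1 := by
  simp [clockwiseTurn, Matrix.mulVec, dotProduct]

theorem clockwiseTurn_apply_one (v : EuclideanSpace ℝ (Fin 2)) : clockwiseTurn v 1 = -v 0 := by
  simp [clockwiseTurn, Matrix.mulVec, dotProduct]

-- Cramer's rule: `c` is recovered from its inner products with `B - A` and `C - A`.
theorem two_mul_sarea_smul (A B C c : EuclideanSpace ℝ (Fin 2)) :
    (2 * sarea A B C) • c =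
      ⟪c, B - A⟫ • clockwiseTurn (C - A) - ⟪c, C - A⟫ • clockwiseTurn (B - A) := by
  ext k
  fin_cases k <;>
    simp only [sarea, Fin.zero_eta, Fin.mk_one, PiLp.smul_apply, PiLp.sub_apply, smul_eq_mul,
      PiLp.inner_apply, RCLike.inner_apply, Real.ringHom_apply, Fin.sum_univ_two,
      clockwiseTurn_apply_zero, clockwiseTurn_apply_one] <;>
    ring

/-- The contribution of the oriented edge `XY` to the circumcenter of mass: the polynomial form of
`sarea 0 X Y` times the circumcenter of `0 X Y`, so that it also makes sense when `0`, `X`, `Y` are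
collinear. -/
noncomputable def edgeMoment (X Y : EuclideanSpace ℝ (Fin 2)) : EuclideanSpace ℝ (Fin 2) :=
  (1 / 4 : ℝ) • (‖X‖ ^ 2 • clockwiseTurn Y - ‖Y‖ ^ 2 • clockwiseTurn X)

theorem edgeMoment_swap (X Y : EuclideanSpace ℝ (Fin 2)) :
    edgeMoment Y X = -edgeMoment X Y := by
  simp only [edgeMoment]
  module

theorem sarea_smul_eq_edgeMoment_add {A B C c : EuclideanSpace ℝ (Fin 2)}
    (hB : dist c A = dist c B) (hC : dist c A = dist c C) :
    sarea A B C • c = edgeMoment A B + edgeMoment B C + edgeMoment C A := by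
  calc sarea A B C • c
      = (1 / 4 : ℝ) • ((2 : ℝ) • (2 * sarea A B C) • c) := by module
    _ = (1 / 4 : ℝ) • ((2 * ⟪c, B - A⟫) • clockwiseTurn (C - A)
          - (2 * ⟪c, C - A⟫) • clockwiseTurn (B - A)) := by
        rw [two_mul_sarea_smul]
        module
    _ = (1 / 4 : ℝ) • ((‖B‖ ^ 2 - ‖A‖ ^ 2) • clockwiseTurn (C - A)
          - (‖C‖ ^ 2 - ‖A‖ ^ 2) • clockwiseTurn (B - A)) := by
        rw [two_mul_inner_sub_of_dist_eq hB, two_mul_inner_sub_of_dist_eq hC]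
    _ = edgeMoment A B + edgeMoment B C + edgeMoment C A := by
        simp only [edgeMoment, map_sub]
        module

section Fan

variable {ι : Type*} [Fintype ι] (σ : Equiv.Perm ι) (P : ι → EuclideanSpace ℝ (Fin 2))

theorem sum_sarea_smul_eq_sum_edgeMoment (O : EuclideanSpace ℝ (Fin 2))
    (cc : ι → EuclideanSpace ℝ (Fin 2))
    (hcc : ∀ i, dist (cc i) O = dist (cc i) (P i) ∧ dist (cc i) O = dist (cc i) (P (σ i))) :
    ∑ i, sarea O (P i) (P (σ i)) • cc i = ∑ i, edgeMoment (P i) (P (σ i)) := by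
  have spokes_cancel : ∑ i, edgeMoment O (P (σ i)) = ∑ i, edgeMoment O (P i) :=
    Equiv.sum_comp σ fun i => edgeMoment O (P i)
  calc ∑ i, sarea O (P i) (P (σ i)) • cc i
      = ∑ i, (edgeMoment O (P i) + edgeMoment (P i) (P (σ i)) - edgeMoment O (P (σ i))) :=
        Finset.sum_congr rfl fun i _ => by
          rw [sarea_smul_eq_edgeMoment_add (hcc i).1 (hcc i).2, edgeMoment_swap O, sub_eq_add_neg]
    _ = ∑ i, edgeMoment (P i) (P (σ i)) := by
        rw [Finset.sum_sub_distrib, Finset.sum_add_distrib, spokes_cancel, add_sub_cancel_left]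

-- The cycles of `σ` are the polygons, so `P` is a finite union of closed polygons.
theorem ccm_fan_independent_of_apex_general (O O' : EuclideanSpace ℝ (Fin 2))
    (cc cc' : ι → EuclideanSpace ℝ (Fin 2))
    (hcc : ∀ i, dist (cc i) O = dist (cc i) (P i) ∧ dist (cc i) O = dist (cc i) (P (σ i)))
    (hcc' : ∀ i, dist (cc' i) O' = dist (cc' i) (P i) ∧
      dist (cc' i) O' = dist (cc' i) (P (σ i))) :
    ∑ i, sarea O (P i) (P (σ i)) • cc i = ∑ i, sarea O' (P i) (P (σ i)) • cc' i :=
  (sum_sarea_smul_eq_sum_edgeMoment σ P O cc hcc).trans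
    (sum_sarea_smul_eq_sum_edgeMoment σ P O' cc' hcc').symm

end Fan

/-- The circumcenter of mass of a polygon `P_0 P_1 ⋯ P_{n−1}` computed from a fan triangulation
does not depend on the choice of the apex of the fan. -/
theorem ccm_fan_independent_of_apex (n : ℕ) [NeZero n] (hn : 3 ≤ n)
    (P : ZMod n → EuclideanSpace ℝ (Fin 2)) (O O' : EuclideanSpace ℝ (Fin 2))
    (hO : ∀ i : ZMod n, AffineIndependent ℝ ![O, P i, P (i + 1)])
    (hO' : ∀ i : ZMod n, AffineIndependent ℝ ![O', P i, P (i + 1)])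
    (cc cc' : ZMod n → EuclideanSpace ℝ (Fin 2))
    (hcc : ∀ i : ZMod n, dist (cc i) O = dist (cc i) (P i) ∧
      dist (cc i) O = dist (cc i) (P (i + 1)))
    (hcc' : ∀ i : ZMod n, dist (cc' i) O' = dist (cc' i) (P i) ∧
      dist (cc' i) O' = dist (cc' i) (P (i + 1))) :
    ∑ i : ZMod n, sarea O (P i) (P (i + 1)) • cc i =
      ∑ i : ZMod n, sarea O' (P i) (P (i + 1)) • cc' i :=
  ccm_fan_independent_of_apex_general (Equiv.addRight 1) P O O' cc cc' hcc hcc'
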